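/- arXiv:math/0403446 — 2 statements merged into one kernel-verified Lean document; each statement's English description precedes it below -/
import Mathlib

section
/- Let f be a continuous function on the unit circle such that for every polynomial P with f + P nonvanishing on the unit circle, the winding number of f + P around 0 is nonnegative. Then the contour integral of f over the unit circle is zero, i.e., ∫_{bΔ} f(z) dz = 0. -/
open Polynomial Metric
open scoped Classical

/-- `g` (restricted to the unit circle) has winding number `n` around `0`:
there is a continuous argument lift `α` along `θ ↦ g (exp (iθ))` whose total
increase over `[0, 2π]` is `2πn`. -/
def HasWindingNumber (g : ℂ → ℂ) (n : ℤ) : Prop :=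
  ∃ α : ℝ → ℝ, Continuous α ∧
    (∀ θ : ℝ, g (Complex.exp (θ * Complex.I)) =
      (‖g (Complex.exp (θ * Complex.I))‖ : ℂ) * Complex.exp (α θ * Complex.I)) ∧
    α (2 * Real.pi) - α 0 = n * (2 * Real.pi)

/-- `f` on the unit circle extends continuously to the closed unit disc,
holomorphically on the open unit disc. -/
def ExtendsHolo (f : ℂ → ℂ) : Prop :=
  ∃ F : ℂ → ℂ, ContinuousOn F (closedBall 0 1) ∧
    DifferentiableOn ℂ F (ball 0 1) ∧ ∀ z ∈ sphere (0:ℂ) 1, F z = f z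

/-- Multiplicity of a zero of a (holomorphic) function: least `n` with
nonvanishing `n`-th derivative. -/
noncomputable def holoOrder (f : ℂ → ℂ) (z : ℂ) : ℕ :=
  sInf {n | iteratedDeriv n f z ≠ 0}

/-! With `c = (2πi)⁻¹ ∮ f`, the function `z f(z) / c` has mean `1` over the unit circle if `c ≠ 0`.
Real parts of polynomials are uniformly dense in the real continuous functions on the circle, so
adding `Re (z P(z))` for a suitable polynomial `P` makes the real part of this function positive
everywhere. Thus `f + c P` is the product of `c / z`, which winds `-1` times around `0`, and a
function with values in the right half-plane, which does not wind at all. -/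

namespace HasWindingNumber

variable {f g : ℂ → ℂ} {m n : ℤ}

theorem congr (hf : HasWindingNumber f n) (hfg : Set.EqOn f g (sphere 0 1)) :
    HasWindingNumber g n := by
  obtain ⟨α, hα, hf, hn⟩ := hf
  refine ⟨α, hα, fun θ => ?_, hn⟩
  rw [← hfg (by simp [Complex.norm_exp_ofReal_mul_I])]
  exact hf θ

theorem mul (hf : HasWindingNumber f m) (hg : HasWindingNumber g n) :
    HasWindingNumber (fun z => f z * g z) (m + n) := by
  obtain ⟨α, hα, hf, hm⟩ := hf
  obtain ⟨β, hβ, hg, hn⟩ := hg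
  refine ⟨fun θ => α θ + β θ, hα.add hβ, fun θ => ?_, ?_⟩
  · simp only [norm_mul, Complex.ofReal_mul, Complex.ofReal_add, add_mul, Complex.exp_add]
    rw [mul_mul_mul_comm, ← hf, ← hg]
  · push_cast
    linear_combination hm + hn

end HasWindingNumber

theorem hasWindingNumber_const (c : ℂ) : HasWindingNumber (fun _ => c) 0 :=
  ⟨fun _ => c.arg, continuous_const, fun _ => (Complex.norm_mul_exp_arg_mul_I c).symm, by simp⟩

theorem hasWindingNumber_zpow (n : ℤ) : HasWindingNumber (fun z => z ^ n) n := by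
  refine ⟨fun θ => n * θ, by fun_prop, fun θ => ?_, by simp⟩
  simp only [norm_zpow, Complex.norm_exp_ofReal_mul_I, one_zpow, Complex.ofReal_one, one_mul]
  simp only [← Complex.exp_int_mul, Complex.ofReal_mul, Complex.ofReal_intCast, mul_assoc]

theorem hasWindingNumber_zero_of_mapsTo_slitPlane {g : ℂ → ℂ} (hg : ContinuousOn g (sphere 0 1))
    (hslit : Set.MapsTo g (sphere 0 1) Complex.slitPlane) : HasWindingNumber g 0 := by
  have hmem (θ : ℝ) : Complex.exp (θ * Complex.I) ∈ sphere (0 : ℂ) 1 := by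
    simp [Complex.norm_exp_ofReal_mul_I]
  have hcont : Continuous fun θ : ℝ => g (Complex.exp (θ * Complex.I)) :=
    hg.comp_continuous (by fun_prop) hmem
  refine ⟨fun θ => (g (Complex.exp (θ * Complex.I))).arg, ?_,
    fun θ => (Complex.norm_mul_exp_arg_mul_I _).symm, by simp⟩
  exact continuous_iff_continuousAt.2 fun θ =>
    (Complex.continuousAt_arg (hslit (hmem θ))).tendsto.comp hcont.continuousAt

theorem hasWindingNumber_neg_of_re_pos {g : ℂ → ℂ} (hg : ContinuousOn g (sphere 0 1)) {a : ℂ}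
    {n : ℤ} (hpos : ∀ z ∈ sphere (0 : ℂ) 1, 0 < (a * (z ^ n * g z)).re) :
    HasWindingNumber g (-n) := by
  have hz_ne {z : ℂ} (hz : z ∈ sphere (0 : ℂ) 1) : z ≠ 0 := ne_of_mem_sphere hz one_ne_zero
  have ha : a ≠ 0 := by
    rintro rfl
    simpa using hpos 1 (by simp)
  have hcont : ContinuousOn (fun z => a * (z ^ n * g z)) (sphere 0 1) :=
    continuousOn_const.mul (((continuousOn_zpow₀ n).mono fun _ => hz_ne).mul hg)
  have hwind := ((hasWindingNumber_const a⁻¹).mul (hasWindingNumber_zpow (-n))).mul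
    (hasWindingNumber_zero_of_mapsTo_slitPlane hcont fun z hz => Or.inl (hpos z hz))
  rw [zero_add, add_zero] at hwind
  refine hwind.congr fun z hz => ?_
  have := hz_ne hz
  simp only [zpow_neg]
  field_simp

theorem circleAverage_sub_smul_eq_circleIntegral {E : Type*} [NormedAddCommGroup E]
    [NormedSpace ℂ E] (f : ℂ → E) (c : ℂ) {R : ℝ} (hR : R ≠ 0) :
    Real.circleAverage (fun z => (z - c) • f z) c R =
      (2 * Real.pi * Complex.I : ℂ)⁻¹ • ∮ z in C(c, R), f z := by
  rw [Real.circleAverage_eq_circleIntegral hR]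
  congr 1
  refine intervalIntegral.integral_congr fun θ _ => ?_
  simp only
  rw [inv_smul_smul₀ (sub_ne_zero.2 (circleMap_ne_center hR))]

theorem circleAverage_re {f : ℂ → ℂ} {c : ℂ} {R : ℝ} (hf : CircleIntegrable f c R) :
    Real.circleAverage (fun z => (f z).re) c R = (Real.circleAverage f c R).re :=
  Complex.reCLM.circleAverage_comp_comm hf

theorem circleAverage_re_eval (P : ℂ[X]) (c : ℂ) (R : ℝ) :
    Real.circleAverage (fun z => (P.eval z).re) c R = (P.eval c).re := by
  rw [circleAverage_re P.continuous.continuousOn.circleIntegrable',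
    P.differentiable.diffContOnCl.circleAverage]

open ComplexConjugate in
theorem exists_polynomial_add_conj_of_mem_span_fourier {T : ℝ} {p : C(AddCircle T, ℂ)}
    (hp : p ∈ Submodule.span ℂ (Set.range (@fourier T))) :
    ∃ P Q : ℂ[X], ∀ x, p x = P.eval (x.toCircle : ℂ) + conj (Q.eval (x.toCircle : ℂ)) := by
  induction hp using Submodule.span_induction with
  | mem _ h =>
    obtain ⟨n, rfl⟩ := h
    obtain ⟨m, rfl | rfl⟩ := n.eq_nat_or_neg
    · exact ⟨X ^ m, 0, fun x => by simp [fourier_apply, AddCircle.toCircle_nsmul]⟩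
    · exact ⟨0, X ^ m, fun x => by
        rw [fourier_neg]
        simp [fourier_apply, AddCircle.toCircle_nsmul]⟩
  | zero => exact ⟨0, 0, by simp⟩
  | add p₁ p₂ _ _ h₁ h₂ =>
    obtain ⟨P₁, Q₁, h₁⟩ := h₁
    obtain ⟨P₂, Q₂, h₂⟩ := h₂
    refine ⟨P₁ + P₂, Q₁ + Q₂, fun x => ?_⟩
    simp only [ContinuousMap.add_apply, h₁, h₂, eval_add, map_add]
    ring
  | smul a p _ h =>
    obtain ⟨P, Q, h⟩ := h
    refine ⟨C a * P, C (conj a) * Q, fun x => ?_⟩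
    simp only [ContinuousMap.smul_apply, smul_eq_mul, h, eval_mul, eval_C, map_mul,
      Complex.conj_conj]
    ring

theorem exists_polynomial_abs_sub_re_lt {u : ℂ → ℝ} (hu : ContinuousOn u (sphere 0 1)) {ε : ℝ}
    (hε : 0 < ε) : ∃ P : ℂ[X], ∀ z ∈ sphere (0 : ℂ) 1, |u z - (P.eval z).re| < ε := by
  let g : C(UnitAddCircle, ℂ) := ⟨fun x => u x.toCircle, Complex.continuous_ofReal.comp
    (hu.comp_continuous (continuous_subtype_val.comp AddCircle.continuous_toCircle)
      fun x => mem_sphere_zero_iff_norm.2 x.toCircle.norm_coe)⟩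
  have hg : g ∈ (Submodule.span ℂ (Set.range (@fourier 1))).topologicalClosure :=
    by
    simp only [span_fourier_closure_eq_top, Submodule.mem_top]
  obtain ⟨p, hp, hgp⟩ := Metric.mem_closure_iff.1 hg ε hε
  obtain ⟨P, Q, hPQ⟩ := exists_polynomial_add_conj_of_mem_span_fourier hp
  refine ⟨P + Q, fun z hz => ?_⟩
  obtain ⟨x, rfl⟩ : ∃ x : UnitAddCircle, (x.toCircle : ℂ) = z :=
    let ⟨x, hx⟩ := (AddCircle.homeomorphCircle one_ne_zero).surjective ⟨z, hz⟩
    ⟨x, by rw [← AddCircle.homeomorphCircle_apply one_ne_zero, hx]⟩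
  calc |u x.toCircle - ((P + Q).eval (x.toCircle : ℂ)).re|
    _ = |(g x - p x).re| := by simp [g, hPQ]
    _ ≤ dist (g x) (p x) := (Complex.abs_re_le_norm _).trans_eq (dist_eq_norm _ _).symm
    _ < ε := (ContinuousMap.dist_apply_le_dist x).trans_lt hgp

theorem exists_polynomial_add_re_mul_pos {u : ℂ → ℝ} (hu : ContinuousOn u (sphere 0 1))
    (hpos : 0 < Real.circleAverage u 0 1) :
    ∃ P : ℂ[X], ∀ z ∈ sphere (0 : ℂ) 1, 0 < u z + (z * P.eval z).re := by
  set ε : ℝ := Real.circleAverage u 0 1 / 2 with hε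
  obtain ⟨Q, hQ⟩ := exists_polynomial_abs_sub_re_lt hu (half_pos hpos)
  have hQ_cont : Continuous fun z => (Q.eval z).re := by fun_prop
  have hQ_zero : ε ≤ (Q.eval 0).re := by
    have havg : Real.circleAverage (fun z => u z - (Q.eval z).re) 0 1 ≤ ε :=
      Real.circleAverage_mono_on_of_le_circle
        ((hu.sub hQ_cont.continuousOn).circleIntegrable zero_le_one)
        fun z hz => (abs_lt.1 (hQ z (by simpa using hz))).2.le
    rw [Real.circleAverage_fun_sub (hu.circleIntegrable zero_le_one)
      (hQ_cont.continuousOn.circleIntegrable zero_le_one), circleAverage_re_eval] at havg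
    linarith
  refine ⟨-Q.divX, fun z hz => ?_⟩
  have hQ_eval : Q.eval z = Q.divX.eval z * z + Q.eval 0 := by
    conv_lhs => rw [← Q.divX_mul_X_add]
    simp [coeff_zero_eq_eval_zero]
  have hre : (z * (-Q.divX).eval z).re = (Q.eval 0).re - (Q.eval z).re := by
    rw [← Complex.sub_re, hQ_eval, eval_neg]
    ring_nf
  linarith [(abs_lt.1 (hQ z hz)).1]

theorem stmt0_general (f : ℂ → ℂ) (hf : ContinuousOn f (sphere (0 : ℂ) 1))
    (h : ∀ P : ℂ[X], (∀ z ∈ sphere (0 : ℂ) 1, f z + P.eval z ≠ 0) →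
      ¬ HasWindingNumber (fun z => f z + P.eval z) (-1)) :
    (∮ z in C(0, 1), f z) = 0 := by
  by_contra hne
  set c : ℂ := (2 * Real.pi * Complex.I)⁻¹ * ∮ z in C(0, 1), f z
  have hc : c ≠ 0 := mul_ne_zero (inv_ne_zero Complex.two_pi_I_ne_zero) hne
  have hc_avg : Real.circleAverage (fun z => z * f z) 0 1 = c := by
    simpa only [sub_zero, smul_eq_mul] using
      circleAverage_sub_smul_eq_circleIntegral f 0 one_ne_zero
  have hcont : ContinuousOn (fun z => c⁻¹ * (z * f z)) (sphere 0 1) := by fun_prop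
  have havg : Real.circleAverage (fun z => (c⁻¹ * (z * f z)).re) 0 1 = 1 := by
    have hsmul : Real.circleAverage (fun z => c⁻¹ * (z * f z)) 0 1 = c⁻¹ * c :=
      Real.circleAverage_fun_smul.trans (congrArg (c⁻¹ • ·) hc_avg)
    rw [circleAverage_re (hcont.circleIntegrable zero_le_one), hsmul, inv_mul_cancel₀ hc,
      Complex.one_re]
  obtain ⟨P, hP⟩ := exists_polynomial_add_re_mul_pos (Complex.continuous_re.comp_continuousOn hcont)
    (one_pos.trans_eq havg.symm)
  have hpos : ∀ z ∈ sphere (0 : ℂ) 1, 0 < (c⁻¹ * (z ^ (1 : ℤ) * (f z + (C c * P).eval z))).re := by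
    intro z hz
    convert hP z hz using 1
    rw [Function.comp_apply, ← Complex.add_re, eval_mul, eval_C, zpow_one]
    field_simp
  refine h (C c * P) (fun z hz hzero => ?_)
    (hasWindingNumber_neg_of_re_pos (hf.add (Polynomial.continuousOn _)) hpos)
  simpa only [hzero, mul_zero, Complex.zero_re, lt_irrefl] using hpos z hz

theorem stmt0 (f : ℂ → ℂ) (hf : ContinuousOn f (sphere (0:ℂ) 1))
    (h : ∀ P : Polynomial ℂ, (∀ z ∈ sphere (0:ℂ) 1, f z + P.eval z ≠ 0) →
      ∀ n : ℤ, HasWindingNumber (fun z => f z + P.eval z) n → 0 ≤ n) :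
    (∮ z in C(0, 1), f z) = 0 :=
  stmt0_general f hf fun P hP hw => absurd (h P hP (-1) hw) (by norm_num)
end

section
/- Let f be a continuous function on the unit circle bΔ that does not extend holomorphically through the open unit disc. Then there exists a two-variable polynomial Q such that z ↦ Q(z, f(z)) is nonvanishing on bΔ and the winding number of z ↦ Q(z, f(z)) around 0 is negative (in fact equals −1). -/
open Polynomial Metric
open scoped Classical

/-!
It suffices to make `z * Q(z, f z)` have positive real part on the circle, for then it has winding
number `0` and `Q(z, f z)` has winding number `-1`. A `Q` of degree one in `f` does this. If `f` has
no holomorphic extension, then one of its negative Fourier coefficients, the mean `c` of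
`z ^ (n + 1) * f z`, is nonzero. The mean `‖c‖ ^ 2` of `conj c * z ^ (n + 1) * f z` is therefore
positive, and Fourier approximation shows that the real part of a continuous function of positive
mean on the circle becomes positive everywhere after subtracting some `z * P z`.

That the vanishing of all negative Fourier coefficients gives a holomorphic extension is seen on
harmonic polynomials `p + conj (z * q)` tending to `f` uniformly on the circle. By the maximum
principle they converge uniformly on the closed disc, while the coefficients of `q`, being negative
Fourier coefficients, tend to zero uniformly, so that the limit is holomorphic.
-/

open Filter
open Real (circleAverage)
open scoped ComplexConjugate Topology

lemma hasWindingNumber_of_zpow_neg_mul_mem_slitPlane {g : ℂ → ℂ} {n : ℤ}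
    (hg : ContinuousOn g (sphere (0 : ℂ) 1))
    (h : ∀ z ∈ sphere (0 : ℂ) 1, z ^ (-n) * g z ∈ Complex.slitPlane) : HasWindingNumber g n := by
  let e (θ : ℝ) : ℂ := Complex.exp (θ * Complex.I)
  have he : Continuous e := by fun_prop
  have he_mem (θ : ℝ) : e θ ∈ sphere (0 : ℂ) 1 := by simp [e, Complex.norm_exp_ofReal_mul_I]
  have he_ne (θ : ℝ) : e θ ≠ 0 := Complex.exp_ne_zero _
  let k (θ : ℝ) : ℂ := e θ ^ (-n) * g (e θ)
  have hk : Continuous k :=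
    (he.zpow₀ (-n) fun θ => Or.inl (he_ne θ)).mul (hg.comp_continuous he he_mem)
  have hk_norm (θ : ℝ) : ‖k θ‖ = ‖g (e θ)‖ := by
    simp [k, mem_sphere_zero_iff_norm.1 (he_mem θ)]
  refine ⟨fun θ => (k θ).arg + n * θ, ?_, fun θ => ?_, ?_⟩
  · refine .add (continuous_iff_continuousAt.2 fun θ => ?_) (by fun_prop)
    exact ContinuousAt.comp (g := Complex.arg) (f := k)
      (Complex.continuousAt_arg (h _ (he_mem θ))) hk.continuousAt
  · calc g (e θ) = k θ * e θ ^ n := by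
          simp only [k, zpow_neg]; field_simp [he_ne θ]
      _ = ‖g (e θ)‖ * Complex.exp ((k θ).arg * Complex.I) * Complex.exp (n * (θ * Complex.I)) := by
          rw [← hk_norm, Complex.norm_mul_exp_arg_mul_I, Complex.exp_int_mul]
      _ = ‖g (e θ)‖ * Complex.exp (((k θ).arg + n * θ : ℝ) * Complex.I) := by
          rw [mul_assoc, ← Complex.exp_add]; push_cast; ring_nf
  · have he_periodic : e (2 * Real.pi) = e 0 := by simp [e]
    simp only [k, he_periodic]
    ring

lemma eval_eq_mul_eval_divX_add_coeff_zero {R : Type*} [CommSemiring R] (p : R[X]) (x : R) :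
    p.eval x = x * p.divX.eval x + p.coeff 0 := by
  simpa only [eval_add, eval_mul, eval_X, eval_C] using congrArg (eval x) (X_mul_divX_add p).symm

section CircleAverage

lemma norm_circleAverage_le_of_norm_le {E : Type*} [NormedAddCommGroup E] [NormedSpace ℝ E]
    {f : ℂ → E} {c : ℂ} {R C : ℝ} (h : ∀ z ∈ sphere c |R|, ‖f z‖ ≤ C) :
    ‖circleAverage f c R‖ ≤ C := by
  have hint := intervalIntegral.norm_integral_le_of_norm_le_const (a := 0) (b := 2 * Real.pi)
    fun θ _ => h _ (circleMap_mem_sphere' c R θ)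
  rw [sub_zero, abs_of_pos Real.two_pi_pos] at hint
  rw [circleAverage, norm_smul, norm_inv, Real.norm_of_nonneg Real.two_pi_pos.le,
    inv_mul_le_iff₀ Real.two_pi_pos]
  exact hint.trans_eq (mul_comm _ _)

lemma circleAverage_eval (p : ℂ[X]) : circleAverage (fun z => p.eval z) 0 1 = p.coeff 0 := by
  rw [coeff_zero_eq_eval_zero]
  exact DiffContOnCl.circleAverage p.differentiable.diffContOnCl

lemma circleAverage_conj {f : ℂ → ℂ} {c : ℂ} {R : ℝ} (hf : CircleIntegrable f c R) :
    circleAverage (fun z => conj (f z)) c R = conj (circleAverage f c R) :=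
  Complex.conjCLE.toContinuousLinearMap.circleAverage_comp_comm hf

lemma circleAverage_pow_mul_conj_eval (n : ℕ) (q : ℂ[X]) :
    circleAverage (fun z => z ^ n * conj (q.eval z)) 0 1 = conj (q.coeff n) := by
  induction n generalizing q with
  | zero =>
    simp only [pow_zero, one_mul]
    rw [circleAverage_conj (ContinuousOn.circleIntegrable' (by fun_prop)), circleAverage_eval]
  | succ n ih =>
    have hsplit : Set.EqOn (fun z => z ^ (n + 1) * conj (q.eval z))
        (fun z => (C (conj (q.coeff 0)) * X ^ (n + 1)).eval z + z ^ n * conj (q.divX.eval z))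
        (sphere 0 |1|) := fun z hz => by
      have hz1 : z * conj z = 1 := by
        rw [Complex.mul_conj', mem_sphere_zero_iff_norm.1 hz]; simp
      simp only [eval_eq_mul_eval_divX_add_coeff_zero q z, map_add, map_mul,
        eval_mul, eval_C, eval_pow, eval_X]
      linear_combination z ^ n * conj (q.divX.eval z) * hz1
    rw [Real.circleAverage_congr_sphere hsplit,
      Real.circleAverage_fun_add (ContinuousOn.circleIntegrable' (by fun_prop))
        (ContinuousOn.circleIntegrable' (by fun_prop)), circleAverage_eval, ih, coeff_divX]
    simp

end CircleAverage

section HarmonicPolynomial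

/-- The complex harmonic polynomial `p + conj (z * q)`. On the unit circle these are exactly the
trigonometric polynomials. The factor `z` keeps the constant term in `p`, so that `p` and `q` are
determined by the function. -/
def harmonicPoly (p q : ℂ[X]) (z : ℂ) : ℂ :=
  p.eval z + conj (z * q.eval z)

@[fun_prop]
lemma continuous_harmonicPoly (p q : ℂ[X]) : Continuous (harmonicPoly p q) := by
  unfold harmonicPoly
  fun_prop

lemma harmonicPoly_sub (p q p' q' : ℂ[X]) (z : ℂ) :
    harmonicPoly (p - p') (q - q') z = harmonicPoly p q z - harmonicPoly p' q' z := by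
  simp only [harmonicPoly, eval_sub, mul_sub, map_sub]
  ring

lemma re_harmonicPoly (p q : ℂ[X]) (z : ℂ) :
    (harmonicPoly p q z).re = (p.coeff 0).re + (z * (p.divX + q).eval z).re := by
  simp only [harmonicPoly, eval_eq_mul_eval_divX_add_coeff_zero p z, eval_add, mul_add,
    Complex.add_re, Complex.conj_re]
  ring

lemma circleAverage_pow_mul_harmonicPoly (n : ℕ) (p q : ℂ[X]) :
    circleAverage (fun z => z ^ n * harmonicPoly p q z) 0 1 =
      (X ^ n * p).coeff 0 + conj ((X * q).coeff n) := by
  have hsplit : (fun z => z ^ n * harmonicPoly p q z) =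
      fun z => (X ^ n * p).eval z + z ^ n * conj ((X * q).eval z) := by
    funext z
    simp [harmonicPoly, mul_add]
  rw [hsplit, Real.circleAverage_fun_add (ContinuousOn.circleIntegrable' (by fun_prop))
    (ContinuousOn.circleIntegrable' (by fun_prop)), circleAverage_eval,
    circleAverage_pow_mul_conj_eval]

lemma circleAverage_harmonicPoly (p q : ℂ[X]) :
    circleAverage (harmonicPoly p q) 0 1 = p.coeff 0 := by
  simpa using circleAverage_pow_mul_harmonicPoly 0 p q

lemma circleAverage_pow_succ_mul_harmonicPoly (n : ℕ) (p q : ℂ[X]) :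
    circleAverage (fun z => z ^ (n + 1) * harmonicPoly p q z) 0 1 = conj (q.coeff n) := by
  simpa [pow_succ', mul_assoc] using circleAverage_pow_mul_harmonicPoly (n + 1) p q

lemma exists_fourier_eq_harmonicPoly {T : ℝ} (n : ℤ) :
    ∃ p q : ℂ[X], ∀ x : AddCircle T, fourier n x = harmonicPoly p q (AddCircle.toCircle x) := by
  cases n with
  | ofNat m =>
    exact ⟨X ^ m, 0, fun x => by simp [harmonicPoly, fourier_apply, AddCircle.toCircle_nsmul]⟩
  | negSucc m =>
    refine ⟨0, X ^ m, fun x => ?_⟩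
    rw [Int.negSucc_eq, fourier_neg, ← Nat.cast_succ]
    simp [harmonicPoly, fourier_apply, AddCircle.toCircle_nsmul, mul_comm]

lemma exists_eq_harmonicPoly_of_mem_span_fourier {T : ℝ} {t : C(AddCircle T, ℂ)}
    (ht : t ∈ Submodule.span ℂ (Set.range (@fourier T))) :
    ∃ p q : ℂ[X], ∀ x, t x = harmonicPoly p q (AddCircle.toCircle x) := by
  induction ht using Submodule.span_induction with
  | mem t ht =>
    obtain ⟨n, rfl⟩ := ht
    exact exists_fourier_eq_harmonicPoly n
  | zero => exact ⟨0, 0, by simp [harmonicPoly]⟩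
  | add s t _ _ hs ht =>
    obtain ⟨p, q, hs⟩ := hs
    obtain ⟨p', q', ht⟩ := ht
    refine ⟨p + p', q + q', fun x => ?_⟩
    simp only [ContinuousMap.add_apply, hs, ht, harmonicPoly, map_mul, map_add, eval_add]
    ring
  | smul a t _ ht =>
    obtain ⟨p, q, ht⟩ := ht
    refine ⟨C a * p, C (conj a) * q, fun x => ?_⟩
    simp only [ContinuousMap.smul_apply, smul_eq_mul, ht, harmonicPoly, map_mul, eval_mul, eval_C,
      Complex.conj_conj]
    ring

lemma exists_harmonicPoly_dist_lt {f : ℂ → ℂ} (hf : ContinuousOn f (sphere (0 : ℂ) 1))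
    {ε : ℝ} (hε : 0 < ε) :
    ∃ p q : ℂ[X], ∀ z ∈ sphere (0 : ℂ) 1, dist (f z) (harmonicPoly p q z) < ε := by
  have : Fact (0 < 2 * Real.pi) := ⟨Real.two_pi_pos⟩
  let F : C(AddCircle (2 * Real.pi), ℂ) :=
    ⟨fun x => f (AddCircle.toCircle x),
      hf.comp_continuous (continuous_subtype_val.comp AddCircle.continuous_toCircle)
        fun x => mem_sphere_zero_iff_norm.2 (Circle.norm_coe _)⟩
  have hF : F ∈ closure (Submodule.span ℂ (Set.range (@fourier (2 * Real.pi))) : Set _) := by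
    rw [← Submodule.topologicalClosure_coe, span_fourier_closure_eq_top]
    exact Submodule.mem_top
  obtain ⟨t, ht, hFt⟩ := Metric.mem_closure_iff.1 hF ε hε
  obtain ⟨p, q, htpq⟩ := exists_eq_harmonicPoly_of_mem_span_fourier ht
  refine ⟨p, q, fun z hz => ?_⟩
  obtain ⟨x, rfl⟩ : ∃ x : AddCircle (2 * Real.pi), (AddCircle.toCircle x : ℂ) = z := by
    obtain ⟨x, hx⟩ :=
      (AddCircle.homeomorphCircle (T := 2 * Real.pi) Real.two_pi_pos.ne').surjective ⟨z, hz⟩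
    exact ⟨x, by rw [← AddCircle.homeomorphCircle_apply Real.two_pi_pos.ne', hx]⟩
  rw [← htpq]
  exact (ContinuousMap.dist_apply_le_dist x).trans_lt hFt

end HarmonicPolynomial

section PositiveRealPart

lemma exists_polynomial_re_sub_mul_eval_pos {h : ℂ → ℂ} (hh : ContinuousOn h (sphere (0 : ℂ) 1))
    (havg : 0 < (circleAverage h 0 1).re) :
    ∃ P : ℂ[X], ∀ z ∈ sphere (0 : ℂ) 1, 0 < (h z - z * P.eval z).re := by
  set ε := (circleAverage h 0 1).re / 2 with hε
  obtain ⟨p, q, hpq⟩ := exists_harmonicPoly_dist_lt hh (half_pos havg)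
  have hmean : ‖circleAverage h 0 1 - p.coeff 0‖ ≤ ε := by
    rw [← circleAverage_harmonicPoly p q, ← Real.circleAverage_fun_sub
      (ContinuousOn.circleIntegrable' (by simpa using hh))
      (ContinuousOn.circleIntegrable' (by fun_prop))]
    refine norm_circleAverage_le_of_norm_le fun z hz => ?_
    rw [← dist_eq_norm]
    exact (hpq z (by simpa using hz)).le
  have hcoeff : ε ≤ (p.coeff 0).re := by
    have := (Complex.re_le_norm _).trans hmean
    rw [Complex.sub_re] at this
    linarith
  refine ⟨p.divX + q, fun z hz => ?_⟩
  have hre : -ε < (h z - harmonicPoly p q z).re :=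
    (abs_lt.1 ((Complex.abs_re_le_norm _).trans_lt (by simpa [dist_eq_norm] using hpq z hz))).1
  rw [Complex.sub_re, re_harmonicPoly] at hre
  rw [Complex.sub_re]
  linarith

lemma exists_mvPolynomial_re_mul_eval_pos {f : ℂ → ℂ} (hf : ContinuousOn f (sphere (0 : ℂ) 1))
    {n : ℕ} (hn : circleAverage (fun z => z ^ (n + 1) * f z) 0 1 ≠ 0) :
    ∃ Q : MvPolynomial (Fin 2) ℂ,
      ∀ z ∈ sphere (0 : ℂ) 1, 0 < (z * MvPolynomial.eval ![z, f z] Q).re := by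
  set c := circleAverage (fun z => z ^ (n + 1) * f z) 0 1 with hc
  have havg : circleAverage (fun z => conj c * (z ^ (n + 1) * f z)) 0 1 = (‖c‖ ^ 2 : ℝ) := by
    simp only [← smul_eq_mul (conj c)]
    rw [Real.circleAverage_fun_smul, ← hc, smul_eq_mul, Complex.conj_mul', Complex.ofReal_pow]
  obtain ⟨P, hP⟩ := exists_polynomial_re_sub_mul_eval_pos
    (h := fun z => conj c * (z ^ (n + 1) * f z)) (by fun_prop)
    (by rw [havg, Complex.ofReal_re]; positivity)
  refine ⟨MvPolynomial.C (conj c) * MvPolynomial.X 0 ^ n * MvPolynomial.X 1 -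
    P.toMvPolynomial 0, fun z hz => ?_⟩
  convert hP z hz using 2
  simp only [map_sub, map_mul, map_pow, MvPolynomial.eval_C, MvPolynomial.eval_X,
    MvPolynomial.eval_toMvPolynomial, Matrix.cons_val_zero, Matrix.cons_val_one]
  ring

end PositiveRealPart

section Extension

lemma norm_add_conj_le_of_forall_mem_frontier {E : Type*} [NormedAddCommGroup E] [NormedSpace ℂ E]
    [Nontrivial E] {f g : E → ℂ} {U : Set E} (hU : Bornology.IsBounded U) (hf : DiffContOnCl ℂ f U)
    (hg : DiffContOnCl ℂ g U) {M : ℝ} (hM : ∀ z ∈ frontier U, ‖f z + conj (g z)‖ ≤ M) {w : E}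
    (hw : w ∈ closure U) : ‖f w + conj (g w)‖ ≤ M := by
  obtain ⟨b, hb, hbw⟩ := RCLike.exists_norm_eq_mul_self (f w + conj (g w))
  have hre (z : E) : (b * f z + conj b * g z).re = (b * (f z + conj (g z))).re := by
    simp only [Complex.add_re, Complex.mul_re, Complex.conj_re, Complex.conj_im, Complex.add_im]
    ring
  have hd : DiffContOnCl ℂ (fun z => Complex.exp (b * f z + conj b * g z)) U :=
    Complex.differentiable_exp.comp_diffContOnCl ((hf.const_smul b).add (hg.const_smul (conj b)))
  have hmax := Complex.norm_le_of_forall_mem_frontier_norm_le hU hd (C := Real.exp M)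
    (fun z hz => by
      rw [Complex.norm_exp, hre, Real.exp_le_exp]
      exact (Complex.re_le_norm _).trans (by simpa [hb] using hM z hz)) hw
  rw [Complex.norm_exp, hre, Real.exp_le_exp, ← hbw] at hmax
  exact hmax

lemma norm_harmonicPoly_le_of_forall_mem_sphere {p q : ℂ[X]} {M : ℝ}
    (h : ∀ z ∈ sphere (0 : ℂ) 1, ‖harmonicPoly p q z‖ ≤ M) {w : ℂ}
    (hw : w ∈ closedBall (0 : ℂ) 1) : ‖harmonicPoly p q w‖ ≤ M := by
  refine norm_add_conj_le_of_forall_mem_frontier (U := ball 0 1) isBounded_ball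
    p.differentiable.diffContOnCl (g := fun z => z * q.eval z)
    (Differentiable.diffContOnCl (by fun_prop)) (fun z hz => ?_)
    (by rwa [closure_ball _ one_ne_zero])
  rw [frontier_ball _ one_ne_zero] at hz
  exact h z hz

variable {ι : Type*} {l : Filter ι}

lemma uniformCauchySeqOn_harmonicPoly_closedBall {p q : ι → ℂ[X]}
    (h : UniformCauchySeqOn (fun i => harmonicPoly (p i) (q i)) l (sphere 0 1)) :
    UniformCauchySeqOn (fun i => harmonicPoly (p i) (q i)) l (closedBall 0 1) := by
  intro u hu
  obtain ⟨ε, hε, hεu⟩ := Metric.mem_uniformity_dist.1 hu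
  filter_upwards [h _ (dist_mem_uniformity (half_pos hε))] with m hm w hw
  have hle : dist (harmonicPoly (p m.1) (q m.1) w) (harmonicPoly (p m.2) (q m.2) w) ≤ ε / 2 := by
    rw [dist_eq_norm, ← harmonicPoly_sub]
    refine norm_harmonicPoly_le_of_forall_mem_sphere (fun z hz => ?_) hw
    rw [harmonicPoly_sub, ← dist_eq_norm]
    exact (hm z hz).le
  exact hεu (hle.trans_lt (half_lt_self hε))

lemma exists_tendstoUniformlyOn_of_uniformCauchySeqOn {X α : Type*} [UniformSpace α]
    [CompleteSpace α] [Nonempty α] [l.NeBot] {F : ι → X → α} {s : Set X}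
    (hF : UniformCauchySeqOn F l s) :
    ∃ f : X → α, TendstoUniformlyOn F f l s := by
  choose! f hf using fun x (hx : x ∈ s) => CompleteSpace.complete (hF.cauchy_map hx)
  exact ⟨f, hF.tendstoUniformlyOn_of_tendsto hf⟩

lemma norm_eval_le_mul_inv_one_sub_norm {R : Type*} [SeminormedRing R] [NormOneClass R] {q : R[X]}
    {ε : ℝ} (hq : ∀ n, ‖q.coeff n‖ ≤ ε) {w : R} (hw : ‖w‖ < 1) :
    ‖q.eval w‖ ≤ ε * (1 - ‖w‖)⁻¹ := by
  have hε : 0 ≤ ε := (norm_nonneg _).trans (hq 0)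
  rw [eval_eq_sum_range]
  calc ‖∑ i ∈ Finset.range (q.natDegree + 1), q.coeff i * w ^ i‖
      ≤ ∑ i ∈ Finset.range (q.natDegree + 1), ε * ‖w‖ ^ i :=
        norm_sum_le_of_le _ fun i _ => (norm_mul_le _ _).trans <| by
          gcongr
          exacts [hq i, norm_pow_le _ _]
    _ ≤ ε * (1 - ‖w‖)⁻¹ := by
        rw [← Finset.mul_sum, ← tsum_geometric_of_lt_one (norm_nonneg w) hw]
        gcongr
        exact (summable_geometric_of_lt_one (norm_nonneg w) hw).sum_le_tsum _
          fun i _ => by positivity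

lemma tendstoLocallyUniformlyOn_eval_zero {R : Type*} [SeminormedRing R] [NormOneClass R]
    {q : ι → R[X]} (hq : TendstoUniformly (fun i n => (q i).coeff n) 0 l) :
    TendstoLocallyUniformlyOn (fun i w => (q i).eval w) 0 l (ball 0 1) := by
  rw [Metric.tendstoLocallyUniformlyOn_iff]
  intro ε hε w hw
  obtain ⟨r, hwr, hr⟩ := exists_between (mem_ball_zero_iff.1 hw)
  have hr' : 0 < 1 - r := sub_pos.2 hr
  refine ⟨ball 0 r, mem_nhdsWithin_of_mem_nhds (isOpen_ball.mem_nhds (by simpa using hwr)), ?_⟩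
  filter_upwards [Metric.tendstoUniformly_iff.1 hq (ε / 2 * (1 - r)) (by positivity)] with i hi z hz
  have hzr : ‖z‖ < r := mem_ball_zero_iff.1 hz
  rw [Pi.zero_apply, dist_zero_left]
  calc ‖(q i).eval z‖ ≤ ε / 2 * (1 - r) * (1 - ‖z‖)⁻¹ :=
        norm_eval_le_mul_inv_one_sub_norm (fun n => by simpa using (hi n).le) (hzr.trans hr)
    _ ≤ ε / 2 * (1 - r) * (1 - r)⁻¹ := by gcongr
    _ < ε := by rw [mul_inv_cancel_right₀ hr'.ne']; exact half_lt_self hε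

lemma tendstoLocallyUniformlyOn_eval_of_harmonicPoly {p q : ι → ℂ[X]} {F : ℂ → ℂ}
    (hF : TendstoLocallyUniformlyOn (fun i => harmonicPoly (p i) (q i)) F l (ball 0 1))
    (hq : TendstoUniformly (fun i n => (q i).coeff n) 0 l) :
    TendstoLocallyUniformlyOn (fun i w => (p i).eval w) F l (ball 0 1) := by
  have hconj : TendstoLocallyUniformlyOn (fun i w => conj (w * (q i).eval w)) 0 l (ball 0 1) := by
    rw [Metric.tendstoLocallyUniformlyOn_iff]
    intro ε hε w hw
    obtain ⟨t, ht, hqt⟩ :=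
      Metric.tendstoLocallyUniformlyOn_iff.1 (tendstoLocallyUniformlyOn_eval_zero hq) ε hε w hw
    refine ⟨t ∩ ball 0 1, inter_mem ht self_mem_nhdsWithin, ?_⟩
    filter_upwards [hqt] with i hi z ⟨hzt, hz⟩
    have hqz : ‖(q i).eval z‖ < ε := by simpa using hi z hzt
    have hz1 : ‖z‖ ≤ 1 := (mem_ball_zero_iff.1 hz).le
    rw [Pi.zero_apply, dist_zero_left, RCLike.norm_conj, norm_mul]
    exact (mul_le_of_le_one_left (norm_nonneg _) hz1).trans_lt hqz
  have hsub := hF.sub hconj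
  rw [sub_zero] at hsub
  exact hsub.congr fun i z _ => by simp [harmonicPoly]

lemma extendsHolo_of_tendstoUniformlyOn_harmonicPoly [l.NeBot] {p q : ι → ℂ[X]} {f : ℂ → ℂ}
    (hf : TendstoUniformlyOn (fun i => harmonicPoly (p i) (q i)) f l (sphere 0 1))
    (hq : TendstoUniformly (fun i n => (q i).coeff n) 0 l) : ExtendsHolo f := by
  obtain ⟨F, hF⟩ := exists_tendstoUniformlyOn_of_uniformCauchySeqOn
    (uniformCauchySeqOn_harmonicPoly_closedBall hf.uniformCauchySeqOn)
  refine ⟨F, hF.continuousOn (.of_forall fun i => by fun_prop), ?_, fun z hz => ?_⟩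
  · have hp := tendstoLocallyUniformlyOn_eval_of_harmonicPoly
      (hF.mono ball_subset_closedBall).tendstoLocallyUniformlyOn hq
    exact hp.differentiableOn (.of_forall fun i => by fun_prop) isOpen_ball
  · exact tendsto_nhds_unique (hF.tendsto_at (sphere_subset_closedBall hz)) (hf.tendsto_at hz)

lemma norm_coeff_le_of_circleAverage_eq_zero {f : ℂ → ℂ} (hf : ContinuousOn f (sphere (0 : ℂ) 1))
    {n : ℕ} (hn : circleAverage (fun z => z ^ (n + 1) * f z) 0 1 = 0) {p q : ℂ[X]} {ε : ℝ}
    (h : ∀ z ∈ sphere (0 : ℂ) 1, dist (f z) (harmonicPoly p q z) ≤ ε) : ‖q.coeff n‖ ≤ ε := by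
  have hcoeff : circleAverage (fun z => z ^ (n + 1) * f z - z ^ (n + 1) * harmonicPoly p q z) 0 1 =
      -conj (q.coeff n) := by
    rw [Real.circleAverage_fun_sub (ContinuousOn.circleIntegrable' (by rw [abs_one]; fun_prop))
      (ContinuousOn.circleIntegrable' (by fun_prop)), hn,
      circleAverage_pow_succ_mul_harmonicPoly, zero_sub]
  rw [← RCLike.norm_conj, ← norm_neg, ← hcoeff]
  refine norm_circleAverage_le_of_norm_le fun z hz => ?_
  rw [abs_one] at hz
  rw [← mul_sub, norm_mul, norm_pow, mem_sphere_zero_iff_norm.1 hz, one_pow, one_mul,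
    ← dist_eq_norm]
  exact h z hz

theorem extendsHolo_of_circleAverage_eq_zero {f : ℂ → ℂ} (hf : ContinuousOn f (sphere (0 : ℂ) 1))
    (h : ∀ n : ℕ, circleAverage (fun z => z ^ (n + 1) * f z) 0 1 = 0) : ExtendsHolo f := by
  choose p q hpq using fun j : ℕ => exists_harmonicPoly_dist_lt hf (Nat.one_div_pos_of_nat (n := j))
  have hlim := tendsto_one_div_add_atTop_nhds_zero_nat (𝕜 := ℝ)
  apply extendsHolo_of_tendstoUniformlyOn_harmonicPoly (l := atTop) (p := p) (q := q)
  · rw [Metric.tendstoUniformlyOn_iff]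
    intro ε hε
    filter_upwards [hlim.eventually_lt_const hε] with j hj z hz
    exact (hpq j z hz).trans hj
  · rw [Metric.tendstoUniformly_iff]
    intro ε hε
    filter_upwards [hlim.eventually_lt_const hε] with j hj n
    rw [Pi.zero_apply, dist_zero_left]
    exact (norm_coeff_le_of_circleAverage_eq_zero hf (h n) fun z hz => (hpq j z hz).le).trans_lt hj

end Extension

lemma continuousOn_mvPolynomial_eval {f : ℂ → ℂ} {s : Set ℂ} (hf : ContinuousOn f s)
    (Q : MvPolynomial (Fin 2) ℂ) : ContinuousOn (fun z => MvPolynomial.eval ![z, f z] Q) s := by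
  refine (MvPolynomial.continuous_eval Q).comp_continuousOn (continuousOn_pi.2 fun i => ?_)
  fin_cases i
  exacts [continuousOn_id, hf]

theorem stmt16 (f : ℂ → ℂ) (hf : ContinuousOn f (sphere (0:ℂ) 1))
    (hne : ¬ ExtendsHolo f) :
    ∃ Q : MvPolynomial (Fin 2) ℂ,
      (∀ z ∈ sphere (0:ℂ) 1, MvPolynomial.eval ![z, f z] Q ≠ 0) ∧
      HasWindingNumber (fun z => MvPolynomial.eval ![z, f z] Q) (-1) := by
  obtain ⟨n, hn⟩ : ∃ n : ℕ, circleAverage (fun z => z ^ (n + 1) * f z) 0 1 ≠ 0 := by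
    contrapose! hne
    exact extendsHolo_of_circleAverage_eq_zero hf hne
  obtain ⟨Q, hQ⟩ := exists_mvPolynomial_re_mul_eval_pos hf hn
  refine ⟨Q, fun z hz h0 => ?_, ?_⟩
  · simpa [h0] using hQ z hz
  · apply hasWindingNumber_of_zpow_neg_mul_mem_slitPlane (continuousOn_mvPolynomial_eval hf Q)
    intro z hz
    rw [neg_neg, zpow_one]
    exact Or.inl (hQ z hz)
end
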